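/- arXiv:math/0405222 — 2 statements merged into one kernel-verified Lean document; each statement's English description precedes it below -/
import Mathlib

section
/- For every θ > 0 and every ω ∈ ℂ with Re(ω) > 0, the Laplace transform of s ↦ Π(θ·s, s) satisfies ∫_0^∞ e^{−ω s}·Π(θ s, s) ds = Π̂(θ, ω), where Π̂(θ, ω) := ∫_0^1 α x^{α−1} [ (ω + xθ + x) · ∫_0^1 ((ω + xθ)/(ω + xθ + y))·α y^{α−1} dy ]^{−1} dx. -/
open MeasureTheory

/-! Fubini turns the correlation function into an average over `x` of contour integrals of
`exp (-(x t + t_w z)) K_x(z)`, where `K_x` is holomorphic off `[0, 1]` and tends to `0` at infinity.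
The contour can be shrunk to radius less than `1 / 2 + Re ω`. On it the exponent
`-(ω + x θ + z) s` has negative real part, so the Laplace transform in `s` produces the Cauchy
kernel `(z - p)⁻¹` with pole `p = -(ω + x θ)` outside the contour, and Cauchy's formula in the
exterior domain evaluates the integral as `-2πi K_x(p)`.

The uniform bound on `K_x` rests on `Re (a / (a - b)) ≥ |a| / (|a| + |b|)` for `|b| < |a|`, which
keeps the resolvent transform of a probability measure on a disc away from `0` outside the disc. -/

section

open Complex Filter Metric Set Topology Bornology
open scoped Real

section CircleIntegral

variable {E : Type*} [NormedAddCommGroup E] [NormedSpace ℂ E] {c p : ℂ} {ρ r R : ℝ}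

theorem circleIntegral_sub_inv_of_notMem_closedBall (hR : 0 ≤ R) (hp : p ∉ closedBall c R) :
    ∮ z in C(c, R), (z - p)⁻¹ = 0 := by
  have hd : DifferentiableOn ℂ (fun z ↦ (z - p)⁻¹) (closedBall c R) :=
    (differentiableOn_id.sub_const p).inv fun z hz ↦
      sub_ne_zero.2 (ne_of_mem_of_not_mem hz hp)
  exact (hd.diffContOnCl_ball subset_rfl).circleIntegral_eq_zero hR

theorem circleIntegral_dslope [CompleteSpace E] {f : ℂ → E} (hR : 0 ≤ R)
    (hf : ContinuousOn f (sphere c R)) (hp : p ∉ sphere c R) :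
    ∮ z in C(c, R), dslope f p z =
      (∮ z in C(c, R), (z - p)⁻¹ • f z) - (∮ z in C(c, R), (z - p)⁻¹) • f p := by
  have hne : ∀ z ∈ sphere c R, z ≠ p := fun z hz ↦ ne_of_mem_of_not_mem hz hp
  have hinv : ContinuousOn (fun z ↦ (z - p)⁻¹) (sphere c R) :=
    (continuousOn_id.sub continuousOn_const).inv₀ fun z hz ↦ sub_ne_zero.2 (hne z hz)
  have hif : CircleIntegrable (fun z ↦ (z - p)⁻¹ • f z) c R := (hinv.smul hf).circleIntegrable hR
  have hip : CircleIntegrable (fun z ↦ (z - p)⁻¹ • f p) c R :=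
    (hinv.smul continuousOn_const).circleIntegrable hR
  rw [← circleIntegral.integral_smul_const, ← circleIntegral.integral_sub hif hip]
  refine circleIntegral.integral_congr hR fun z hz ↦ ?_
  simp only [dslope_of_ne f (hne z hz), slope, vsub_eq_sub, smul_sub]

theorem circleIntegral_eq_of_differentiableOn_compl_closedBall {f : ℂ → E} (hρ : 0 ≤ ρ)
    (hr : ρ < r) (hR : ρ < R) (hf : DifferentiableOn ℂ f (closedBall c ρ)ᶜ) :
    ∮ z in C(c, R), f z = ∮ z in C(c, r), f z := by
  wlog hrR : r ≤ R generalizing r R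
  · exact (this hR hr (le_of_not_ge hrR)).symm
  have hd : ∀ z ∉ ball c r, DifferentiableAt ℂ f z := fun z hz ↦
    hf.differentiableAt (isClosed_closedBall.isOpen_compl.mem_nhds
      fun h ↦ hz (closedBall_subset_ball hr h))
  exact Complex.circleIntegral_eq_of_differentiable_on_annulus_off_countable (hρ.trans_lt hr) hrR
    countable_empty (fun z hz ↦ (hd z hz.2).continuousAt.continuousWithinAt)
    fun z hz ↦ hd z fun h ↦ hz.1.2 (ball_subset_closedBall h)

theorem tendsto_circleIntegral_atTop_zero {f : ℂ → E}
    (hf : Tendsto (fun z ↦ (z - c) • f z) (cobounded ℂ) (𝓝 0)) :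
    Tendsto (fun R : ℝ ↦ ∮ z in C(c, R), f z) atTop (𝓝 0) := by
  refine NormedAddGroup.tendsto_nhds_zero.2 fun ε hε ↦ ?_
  obtain ⟨R₀, -, hR₀⟩ := (hasBasis_cobounded_compl_closedBall c).eventually_iff.1
    (NormedAddGroup.tendsto_nhds_zero.1 hf (ε / (4 * π)) (by positivity))
  filter_upwards [eventually_gt_atTop R₀, eventually_gt_atTop 0] with R hR hR0
  have hbound : ∀ z ∈ sphere c R, ‖f z‖ ≤ ε / (4 * π) / R := fun z hz ↦ by
    have hzR : ‖z - c‖ = R := mem_sphere_iff_norm.1 hz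
    have := hR₀ (x := z) (by simpa [dist_eq_norm, hzR] using hR)
    rw [norm_smul, hzR] at this
    rw [le_div_iff₀' hR0]
    exact this.le
  calc ‖∮ z in C(c, R), f z‖ ≤ 2 * π * R * (ε / (4 * π) / R) :=
        circleIntegral.norm_integral_le_of_norm_le_const hR0.le hbound
    _ = ε / 2 := by field_simp; norm_num
    _ < ε := half_lt_self hε

theorem tendsto_sub_mul_sub_inv_cobounded (c p : ℂ) :
    Tendsto (fun z ↦ (z - c) * (z - p)⁻¹) (cobounded ℂ) (𝓝 1) := by
  have hinv : Tendsto (fun z ↦ (z - p)⁻¹) (cobounded ℂ) (𝓝 0) :=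
    tendsto_inv₀_cobounded.comp (tendsto_sub_const_cobounded p)
  have hlim : Tendsto (fun z ↦ 1 + (p - c) * (z - p)⁻¹) (cobounded ℂ) (𝓝 1) := by
    simpa using (hinv.const_mul (p - c)).const_add 1
  refine hlim.congr' ?_
  filter_upwards [eventually_ne_cobounded p] with z hz
  have := sub_ne_zero.2 hz
  field_simp
  ring

theorem circleIntegral_sub_inv_smul_of_tendsto_cobounded_zero [CompleteSpace E] {f : ℂ → E}
    (hρ : 0 ≤ ρ) (hr : ρ < r) (hp : p ∉ closedBall c r)
    (hf : DifferentiableOn ℂ f (closedBall c ρ)ᶜ) (hf0 : Tendsto f (cobounded ℂ) (𝓝 0)) :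
    ∮ z in C(c, r), (z - p)⁻¹ • f z = -(2 * π * I : ℂ) • f p := by
  have hpρ : (closedBall c ρ)ᶜ ∈ 𝓝 p :=
    isClosed_closedBall.isOpen_compl.mem_nhds fun h ↦ hp (closedBall_subset_closedBall hr.le h)
  have hcont : ∀ R, ρ < R → ContinuousOn f (sphere c R) := fun R hR ↦
    hf.continuousOn.mono fun z hz h ↦ hR.not_ge ((mem_sphere.1 hz).symm.trans_le h)
  have hr_dslope : ∮ z in C(c, r), dslope f p z = ∮ z in C(c, r), (z - p)⁻¹ • f z := by
    rw [circleIntegral_dslope (hρ.trans hr.le) (hcont r hr) fun h ↦ hp (sphere_subset_closedBall h),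
      circleIntegral_sub_inv_of_notMem_closedBall (hρ.trans hr.le) hp, zero_smul, sub_zero]
  have hR_dslope : ∀ᶠ R in atTop, ∮ z in C(c, R), (z - p)⁻¹ • f z =
      (∮ z in C(c, r), (z - p)⁻¹ • f z) + (2 * π * I : ℂ) • f p := by
    filter_upwards [eventually_gt_atTop ρ, eventually_gt_atTop (dist p c)] with R hR hpR
    rw [← hr_dslope, ← circleIntegral_eq_of_differentiableOn_compl_closedBall hρ hr hR
      ((Complex.differentiableOn_dslope hpρ).2 hf),
      circleIntegral_dslope (hρ.trans hR.le) (hcont R hR) hpR.ne,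
      circleIntegral.integral_sub_inv_of_mem_ball hpR, sub_add_cancel]
  have hlim : Tendsto (fun R : ℝ ↦ ∮ z in C(c, R), (z - p)⁻¹ • f z) atTop (𝓝 0) := by
    refine tendsto_circleIntegral_atTop_zero ?_
    simpa only [smul_smul, smul_zero] using (tendsto_sub_mul_sub_inv_cobounded c p).smul hf0
  have := tendsto_nhds_unique (tendsto_const_nhds.congr' (hR_dslope.mono fun _ h ↦ h.symm)) hlim
  rw [neg_smul]
  exact eq_neg_of_add_eq_zero_left this

end CircleIntegral

section CircleFubini

variable {E X : Type*} [NormedAddCommGroup E] [NormedSpace ℂ E] [MeasurableSpace X]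
  {μ : Measure X} {f : ℂ → X → E} {bound : X → ℝ} {c : ℂ} {R : ℝ}

theorem integrable_deriv_circleMap_smul (hf : StronglyMeasurable (Function.uncurry f))
    (hbound : Integrable bound μ) (hfb : ∀ᵐ x ∂μ, ∀ z ∈ sphere c |R|, ‖f z x‖ ≤ bound x) :
    Integrable (fun q : ℝ × X ↦ deriv (circleMap c R) q.1 • f (circleMap c R q.1) q.2)
      ((volume.restrict (Ioc 0 (2 * π))).prod μ) := by
  have hmeas : StronglyMeasurable fun q : ℝ × X ↦
      deriv (circleMap c R) q.1 • f (circleMap c R q.1) q.2 := by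
    simp only [deriv_circleMap]
    exact ((measurable_circleMap 0 R).comp measurable_fst |>.mul_const I).stronglyMeasurable.smul
      (hf.comp_measurable (((measurable_circleMap c R).comp measurable_fst).prodMk measurable_snd))
  have hdom : Integrable (fun q : ℝ × X ↦ |R| * bound q.2)
      ((volume.restrict (Ioc 0 (2 * π))).prod μ) := (integrable_const |R|).mul_prod hbound
  refine hdom.mono' hmeas.aestronglyMeasurable ?_
  filter_upwards [Measure.quasiMeasurePreserving_snd.ae hfb] with q hq
  have hderiv : ‖deriv (circleMap c R) q.1‖ = |R| := by simp [deriv_circleMap]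
  rw [norm_smul, hderiv]
  gcongr
  exact hq _ (circleMap_mem_sphere' c R q.1)

theorem circleIntegral_eq_setIntegral (g : ℂ → E) :
    ∮ z in C(c, R), g z =
      ∫ τ in Ioc 0 (2 * π), deriv (circleMap c R) τ • g (circleMap c R τ) :=
  intervalIntegral.integral_of_le Real.two_pi_pos.le

theorem integrable_circleIntegral [SFinite μ] (hf : StronglyMeasurable (Function.uncurry f))
    (hbound : Integrable bound μ) (hfb : ∀ᵐ x ∂μ, ∀ z ∈ sphere c |R|, ‖f z x‖ ≤ bound x) :
    Integrable (fun x ↦ ∮ z in C(c, R), f z x) μ := by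
  simp only [circleIntegral_eq_setIntegral]
  exact (integrable_deriv_circleMap_smul hf hbound hfb).integral_prod_right

theorem circleIntegral_integral_swap [SFinite μ] (hf : StronglyMeasurable (Function.uncurry f))
    (hbound : Integrable bound μ) (hfb : ∀ᵐ x ∂μ, ∀ z ∈ sphere c |R|, ‖f z x‖ ≤ bound x) :
    ∮ z in C(c, R), ∫ x, f z x ∂μ = ∫ x, ∮ z in C(c, R), f z x ∂μ := by
  simp only [circleIntegral_eq_setIntegral, ← integral_smul]
  exact integral_integral_swap (integrable_deriv_circleMap_smul hf hbound hfb)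

end CircleFubini

section Laplace

variable {E : Type*} [NormedAddCommGroup E] [NormedSpace ℂ E] [CompleteSpace E]
  {a c z : ℂ} {R δ s M : ℝ}

theorem re_sub_abs_le_re_of_mem_sphere (hz : z ∈ sphere c |R|) : c.re - |R| ≤ z.re := by
  have h : |z.re - c.re| ≤ |R| := by
    simpa [mem_sphere_iff_norm.1 hz] using abs_re_le_norm (z - c)
  linarith [neg_le_of_abs_le h]

theorem norm_exp_neg_mul_le_of_mem_sphere (hz : z ∈ sphere c |R|) (hδ : δ ≤ (a + c).re - |R|)
    (hs : 0 ≤ s) : ‖exp (-((a + z) * s))‖ ≤ Real.exp (-δ * s) := by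
  have hre : δ ≤ (a + z).re := by
    rw [add_re] at hδ ⊢
    linarith [re_sub_abs_le_re_of_mem_sphere hz]
  rw [norm_exp, neg_re, re_mul_ofReal, ← neg_mul]
  gcongr

theorem integral_exp_neg_mul_Ioi (ha : 0 < a.re) :
    ∫ s : ℝ in Ioi 0, exp (-(a * s)) = a⁻¹ := by
  have h := integral_exp_mul_complex_Ioi (a := -a) (by simpa using ha) 0
  simpa [neg_div_neg_eq] using h

theorem integral_Ioi_circleIntegral_exp_neg_mul_smul {f : ℂ → E} (hf : StronglyMeasurable f)
    (hM : ∀ z ∈ sphere c |R|, ‖f z‖ ≤ M) (ha : |R| < (a + c).re) :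
    ∫ s : ℝ in Ioi 0, ∮ z in C(c, R), exp (-((a + z) * s)) • f z =
      ∮ z in C(c, R), (a + z)⁻¹ • f z := by
  have hmeas : StronglyMeasurable
      (Function.uncurry fun (z : ℂ) (s : ℝ) ↦ exp (-((a + z) * s)) • f z) :=
    StronglyMeasurable.smul (Measurable.stronglyMeasurable (by fun_prop))
      (hf.comp_measurable measurable_fst)
  have hbound : Integrable (fun s ↦ Real.exp (-((a + c).re - |R|) * s) * M)
      (volume.restrict (Ioi 0)) :=
    (exp_neg_integrableOn_Ioi 0 (sub_pos.2 ha)).mul_const M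
  rw [← circleIntegral_integral_swap hmeas hbound]
  · simp only [circleIntegral_eq_setIntegral]
    refine integral_congr_ae (.of_forall fun τ ↦ ?_)
    have hre : 0 < (a + circleMap c R τ).re := by
      rw [add_re] at ha ⊢
      linarith [re_sub_abs_le_re_of_mem_sphere (circleMap_mem_sphere' c R τ)]
    simp only [integral_smul_const, integral_exp_neg_mul_Ioi hre]
  · filter_upwards [ae_restrict_mem measurableSet_Ioi] with s hs z hz
    rw [norm_smul]
    exact mul_le_mul (norm_exp_neg_mul_le_of_mem_sphere hz le_rfl (mem_Ioi.1 hs).le) (hM z hz)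
      (norm_nonneg _) (Real.exp_pos _).le

theorem integral_Ioi_integral_circleIntegral_exp_neg_mul_smul {X : Type*} [MeasurableSpace X]
    {μ : Measure X} [IsFiniteMeasure μ] {a : X → ℂ} {f : ℂ → X → E} (ha : Measurable a)
    (hf : StronglyMeasurable (Function.uncurry f)) (hδ : 0 < δ)
    (haδ : ∀ᵐ x ∂μ, δ ≤ (a x + c).re - |R|)
    (hM : ∀ᵐ x ∂μ, ∀ z ∈ sphere c |R|, ‖f z x‖ ≤ M) :
    ∫ s : ℝ in Ioi 0, ∫ x, (∮ z in C(c, R), exp (-((a x + z) * s)) • f z x) ∂μ =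
      ∫ x, (∮ z in C(c, R), (a x + z)⁻¹ • f z x) ∂μ := by
  have hmeas : StronglyMeasurable
      (Function.uncurry fun (z : ℂ) (q : ℝ × X) ↦ exp (-((a q.2 + z) * q.1)) • f z q.2) :=
    StronglyMeasurable.smul (Measurable.stronglyMeasurable (by fun_prop))
      (hf.comp_measurable (measurable_fst.prodMk (measurable_snd.comp measurable_snd)))
  have hbound : Integrable (fun q : ℝ × X ↦ Real.exp (-δ * q.1) * M)
      ((volume.restrict (Ioi 0)).prod μ) :=
    (exp_neg_integrableOn_Ioi 0 hδ).mul_prod (integrable_const M)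
  have hle : ∀ᵐ q : ℝ × X ∂(volume.restrict (Ioi 0)).prod μ, ∀ z ∈ sphere c |R|,
      ‖exp (-((a q.2 + z) * q.1)) • f z q.2‖ ≤ Real.exp (-δ * q.1) * M := by
    filter_upwards [Measure.quasiMeasurePreserving_fst.ae (ae_restrict_mem measurableSet_Ioi),
      Measure.quasiMeasurePreserving_snd.ae haδ, Measure.quasiMeasurePreserving_snd.ae hM]
      with q hs hδq hMq z hz
    rw [norm_smul]
    exact mul_le_mul (norm_exp_neg_mul_le_of_mem_sphere hz hδq (mem_Ioi.1 hs).le) (hMq z hz)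
      (norm_nonneg _) (Real.exp_pos _).le
  rw [integral_integral_swap (integrable_circleIntegral hmeas hbound hle)]
  refine integral_congr_ae ?_
  filter_upwards [haδ, hM] with x hx hMx
  exact integral_Ioi_circleIntegral_exp_neg_mul_smul
    (hf.comp_measurable measurable_prodMk_right) hMx (sub_pos.1 (hδ.trans_le hx))

end Laplace

section ResolventTransform

theorem norm_div_add_le_re_div_sub {a b : ℂ} (hab : ‖b‖ < ‖a‖) :
    ‖a‖ / (‖a‖ + ‖b‖) ≤ (a / (a - b)).re := by
  have hpos : 0 < ‖a - b‖ := (sub_pos.2 hab).trans_le (norm_sub_norm_le a b)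
  have hre : (a / (a - b)).re = (‖a‖ ^ 2 + ‖a - b‖ ^ 2 - ‖b‖ ^ 2) / (2 * ‖a - b‖ ^ 2) := by
    simp only [div_re, ← normSq_eq_norm_sq] at hpos ⊢
    rw [← add_div, mul_comm 2, ← div_div, div_right_comm]
    congr 1
    simp only [normSq_apply, sub_re, sub_im]
    ring
  have hsq : ‖a - b‖ ^ 2 ≤ (‖a‖ + ‖b‖) ^ 2 := by gcongr; exact norm_sub_le a b
  rw [hre, div_le_div_iff₀ (by linarith [norm_nonneg b]) (by positivity)]
  linarith [mul_le_mul_of_nonneg_left hsq (sub_pos.2 hab).le]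

theorem resolventTransform_eq_integral_inv (μ : Measure ℝ) (z : ℂ) :
    resolventTransform μ z = ∫ x : ℝ, ((x : ℂ) - z)⁻¹ ∂μ := by
  simp [resolventTransform_apply, resolvent]

theorem measurable_resolventTransform (μ : Measure ℝ) [SFinite μ] :
    Measurable (resolventTransform μ : ℂ → ℂ) := by
  have hmeas : StronglyMeasurable fun q : ℂ × ℝ ↦ ((q.2 : ℂ) - q.1)⁻¹ :=
    Measurable.stronglyMeasurable (by fun_prop)
  have heq : resolventTransform μ = fun z ↦ ∫ x : ℝ, ((x : ℂ) - z)⁻¹ ∂μ :=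
    funext (resolventTransform_eq_integral_inv μ)
  rw [heq]
  exact hmeas.integral_prod_right.measurable

variable {μ : Measure ℝ} {c z : ℂ} {ρ : ℝ}

theorem notMem_image_support (hμ : ∀ᵐ x : ℝ ∂μ, (x : ℂ) ∈ closedBall c ρ)
    (hz : z ∉ closedBall c ρ) : z ∉ algebraMap ℝ ℂ '' μ.support := by
  rintro ⟨x, hx, rfl⟩
  exact hz (Measure.support_subset_of_isClosed
    (isClosed_closedBall.preimage continuous_ofReal) hμ hx)

theorem differentiableOn_resolventTransform [IsFiniteMeasure μ]
    (hμ : ∀ᵐ x : ℝ ∂μ, (x : ℂ) ∈ closedBall c ρ) :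
    DifferentiableOn ℂ (resolventTransform μ) (closedBall c ρ)ᶜ := fun z hz ↦
  (hasDerivAt_resolventTransform z (notMem_image_support hμ hz)).differentiableAt
    |>.differentiableWithinAt

theorem inv_le_norm_resolventTransform [IsProbabilityMeasure μ]
    (hμ : ∀ᵐ x : ℝ ∂μ, (x : ℂ) ∈ closedBall c ρ) (hz : z ∉ closedBall c ρ) :
    (‖z - c‖ + ρ)⁻¹ ≤ ‖resolventTransform μ z‖ := by
  have hzρ : ρ < ‖z - c‖ := by simpa [dist_eq_norm] using hz
  obtain ⟨x₀, hx₀⟩ := hμ.exists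
  have hpos : 0 < ‖z - c‖ :=
    ((norm_nonneg _).trans (mem_closedBall_iff_norm.1 hx₀)).trans_lt hzρ
  have hint : Integrable (fun x : ℝ ↦ (c - z) * ((x : ℂ) - z)⁻¹) μ := by
    have := (integrable_resolvent (notMem_image_support hμ hz)).const_mul (c - z)
    simpa only [resolvent, Ring.inverse_eq_inv', coe_algebraMap] using this
  have hpoint : ∀ᵐ x : ℝ ∂μ, ‖z - c‖ / (‖z - c‖ + ρ) ≤ ((c - z) * ((x : ℂ) - z)⁻¹).re := by
    filter_upwards [hμ] with x hx
    have hxρ : ‖(x : ℂ) - c‖ ≤ ρ := mem_closedBall_iff_norm.1 hx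
    calc ‖z - c‖ / (‖z - c‖ + ρ) ≤ ‖z - c‖ / (‖z - c‖ + ‖(x : ℂ) - c‖) := by gcongr
      _ ≤ ((z - c) / (z - c - (x - c))).re := norm_div_add_le_re_div_sub (hxρ.trans_lt hzρ)
      _ = ((c - z) * ((x : ℂ) - z)⁻¹).re := by
        rw [sub_sub_sub_cancel_right, ← neg_div_neg_eq, neg_sub, neg_sub, div_eq_mul_inv]
  have hle : ‖z - c‖ * (‖z - c‖ + ρ)⁻¹ ≤ ‖z - c‖ * ‖resolventTransform μ z‖ :=
    calc ‖z - c‖ / (‖z - c‖ + ρ) = ∫ _, ‖z - c‖ / (‖z - c‖ + ρ) ∂μ := by simp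
      _ ≤ ∫ x : ℝ, ((c - z) * ((x : ℂ) - z)⁻¹).re ∂μ :=
        integral_mono_ae (integrable_const _) hint.re hpoint
      _ = ((c - z) * resolventTransform μ z).re := by
        rw [resolventTransform_eq_integral_inv, ← integral_const_mul]
        exact integral_re hint
      _ ≤ ‖z - c‖ * ‖resolventTransform μ z‖ := by
        rw [norm_sub_rev, ← norm_mul]
        exact re_le_norm _
  exact le_of_mul_le_mul_left hle hpos

end ResolventTransform

section CorrelationKernel

/-- The integrand of the correlation function with its exponential factors removed. With the
paper's signs this is `1 / (λ (λ - x) ∫ dμ(y) / (λ - y))`; the resolvent transform is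
`∫ dμ(y) / (y - λ)`, and the two sign changes cancel. -/
noncomputable def correlationKernel (μ : Measure ℝ) (z : ℂ) (x : ℝ) : ℂ :=
  (z * resolventTransform μ z * (x - z))⁻¹

theorem measurable_correlationKernel (μ : Measure ℝ) [SFinite μ] :
    Measurable (Function.uncurry (correlationKernel μ)) :=
  ((measurable_fst.mul ((measurable_resolventTransform μ).comp measurable_fst)).mul
    ((measurable_ofReal.comp measurable_snd).sub measurable_fst)).inv

theorem neg_correlationKernel_neg (μ : Measure ℝ) (a : ℂ) (x : ℝ) :
    -correlationKernel μ (-a) x = ((a + x) * ∫ y : ℝ, a / (a + y) ∂μ)⁻¹ := by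
  have hint : ∫ y : ℝ, a / (a + y) ∂μ = a * resolventTransform μ (-a) := by
    simp only [resolventTransform_eq_integral_inv, ← integral_const_mul, div_eq_mul_inv,
      sub_neg_eq_add, add_comm]
  rw [hint, correlationKernel, ← inv_neg]
  ring

theorem sub_le_norm_sub_of_mem_closedBall {E : Type*} [SeminormedAddCommGroup E] {c w z : E}
    {ρ : ℝ} (hw : w ∈ closedBall c ρ) : ‖z - c‖ - ρ ≤ ‖w - z‖ := by
  have := norm_sub_le_norm_sub_add_norm_sub z w c
  rw [norm_sub_rev z w] at this
  linarith [mem_closedBall_iff_norm.1 hw]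

variable {μ : Measure ℝ} [IsProbabilityMeasure μ] {c z : ℂ} {x ρ r : ℝ}

theorem differentiableOn_correlationKernel (hμ : ∀ᵐ x : ℝ ∂μ, (x : ℂ) ∈ closedBall c ρ)
    (h0 : 0 ∈ closedBall c ρ) (hx : (x : ℂ) ∈ closedBall c ρ) :
    DifferentiableOn ℂ (correlationKernel μ · x) (closedBall c ρ)ᶜ := by
  refine ((differentiableOn_id.mul (differentiableOn_resolventTransform hμ)).mul
    (differentiableOn_id.const_sub _)).inv fun z hz ↦ ?_
  have hρ : 0 ≤ ρ := nonempty_closedBall.1 ⟨0, h0⟩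
  have hd : 0 < ‖z - c‖ := hρ.trans_lt (by simpa [dist_eq_norm] using hz)
  have hR : 0 < ‖resolventTransform μ z‖ :=
    (inv_pos.2 (add_pos_of_pos_of_nonneg hd hρ)).trans_le (inv_le_norm_resolventTransform hμ hz)
  exact mul_ne_zero (mul_ne_zero (ne_of_mem_of_not_mem h0 hz).symm (norm_pos_iff.1 hR))
    (sub_ne_zero.2 (ne_of_mem_of_not_mem hx hz))

theorem norm_correlationKernel_le (hμ : ∀ᵐ x : ℝ ∂μ, (x : ℂ) ∈ closedBall c ρ)
    (h0 : 0 ∈ closedBall c ρ) (hx : (x : ℂ) ∈ closedBall c ρ) (hz : z ∈ sphere c r)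
    (hr : ρ < r) : ‖correlationKernel μ z x‖ ≤ (r + ρ) / (r - ρ) ^ 2 := by
  have hzr : ‖z - c‖ = r := mem_sphere_iff_norm.1 hz
  have hρ : 0 ≤ ρ := nonempty_closedBall.1 ⟨0, h0⟩
  have hR := inv_le_norm_resolventTransform hμ (z := z) (by simpa [dist_eq_norm, hzr] using hr)
  have hz0 := sub_le_norm_sub_of_mem_closedBall (z := z) h0
  have hzx := sub_le_norm_sub_of_mem_closedBall (z := z) hx
  rw [zero_sub, norm_neg] at hz0
  rw [hzr] at hR hz0 hzx
  have hd : 0 < r - ρ := sub_pos.2 hr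
  have hs : 0 < r + ρ := by linarith
  calc ‖correlationKernel μ z x‖ = (‖z‖ * ‖resolventTransform μ z‖ * ‖(x : ℂ) - z‖)⁻¹ := by
        simp only [correlationKernel, norm_inv, norm_mul]
    _ ≤ ((r - ρ) * (r + ρ)⁻¹ * (r - ρ))⁻¹ := by gcongr
    _ = (r + ρ) / (r - ρ) ^ 2 := by field_simp

theorem tendsto_correlationKernel_cobounded (hμ : ∀ᵐ x : ℝ ∂μ, (x : ℂ) ∈ closedBall c ρ)
    (h0 : 0 ∈ closedBall c ρ) (hx : (x : ℂ) ∈ closedBall c ρ) :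
    Tendsto (correlationKernel μ · x) (cobounded ℂ) (𝓝 0) := by
  have hdist : Tendsto (fun z ↦ ‖z - c‖ - ρ) (cobounded ℂ) atTop :=
    tendsto_atTop_add_const_right _ _
      (tendsto_norm_cobounded_atTop.comp (tendsto_sub_const_cobounded c))
  have hbound : Tendsto (fun z ↦ (‖z - c‖ - ρ)⁻¹ + 2 * ρ * ((‖z - c‖ - ρ)⁻¹) ^ 2)
      (cobounded ℂ) (𝓝 0) := by
    have hinv := tendsto_inv_atTop_zero.comp hdist
    simpa using hinv.add ((hinv.pow 2).const_mul (2 * ρ))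
  refine squeeze_zero_norm' ?_ hbound
  filter_upwards [hdist.eventually_gt_atTop 0] with z hz
  refine (norm_correlationKernel_le hμ h0 hx (mem_sphere_iff_norm.2 rfl)
    (sub_pos.1 hz)).trans_eq ?_
  field_simp
  ring

theorem circleIntegral_add_inv_smul_correlationKernel {a : ℂ}
    (hμ : ∀ᵐ x : ℝ ∂μ, (x : ℂ) ∈ closedBall c ρ) (h0 : 0 ∈ closedBall c ρ)
    (hx : (x : ℂ) ∈ closedBall c ρ) (hr : ρ < r) (ha : r < (a + c).re) :
    ∮ z in C(c, r), (a + z)⁻¹ • correlationKernel μ z x =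
      (2 * π * I) * ((a + x) * ∫ y : ℝ, a / (a + y) ∂μ)⁻¹ := by
  have hna : -a ∉ closedBall c r := fun h ↦ by
    have := (re_le_norm (c - -a)).trans (mem_closedBall_iff_norm'.1 h)
    rw [sub_neg_eq_add, add_comm] at this
    exact this.not_gt ha
  have hcauchy := circleIntegral_sub_inv_smul_of_tendsto_cobounded_zero
    (nonempty_closedBall.1 ⟨0, h0⟩) hr hna (differentiableOn_correlationKernel hμ h0 hx)
    (tendsto_correlationKernel_cobounded hμ h0 hx)
  simp only [sub_neg_eq_add, add_comm _ a] at hcauchy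
  rw [hcauchy, ← neg_correlationKernel_neg, smul_eq_mul, neg_mul_comm]

end CorrelationKernel

section Correlation

/-- The correlation function `Π(t, t_w)` with an arbitrary measure `μ` on `[0, 1]` in place of
`α x ^ (α - 1) dx`. The contour is the circle of center `1 / 2` and radius `1`. -/
noncomputable def correlation (μ : Measure ℝ) (t t_w : ℝ) : ℂ :=
  (1 / (2 * π * I)) * ∮ z in C(1 / 2, 1), (exp (-(t_w * z)) / z) *
    ((∫ u : ℝ, exp (-(u * t)) / (z - u) ∂μ) / ∫ u : ℝ, 1 / (z - u) ∂μ)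

theorem exp_div_mul_integral_div_eq_integral_correlationKernel (μ : Measure ℝ) (t t_w : ℝ)
    (z : ℂ) :
    (exp (-(t_w * z)) / z) *
        ((∫ u : ℝ, exp (-(u * t)) / (z - u) ∂μ) / ∫ u : ℝ, 1 / (z - u) ∂μ) =
      ∫ x : ℝ, exp (-(x * t + t_w * z)) • correlationKernel μ z x ∂μ := by
  have hR : ∫ u : ℝ, 1 / (z - u) ∂μ = -resolventTransform μ z := by
    rw [resolventTransform_eq_integral_inv, ← integral_neg]
    simp only [one_div, ← inv_neg, neg_sub]
  rw [hR, ← integral_div, ← integral_const_mul]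
  refine integral_congr_ae (.of_forall fun x ↦ ?_)
  simp only [correlationKernel, smul_eq_mul, neg_add, exp_add, ← neg_sub (x : ℂ) z, div_eq_mul_inv,
    mul_inv, inv_neg]
  ring

variable {μ : Measure ℝ} [IsProbabilityMeasure μ] {θ r : ℝ} {ω : ℂ}

theorem ofReal_mem_closedBall_of_mem_Icc {x : ℝ} (hx : x ∈ Icc (0 : ℝ) 1) :
    (x : ℂ) ∈ closedBall (1 / 2) (1 / 2) := by
  have h : (x : ℂ) - 1 / 2 = ((x - 1 / 2 : ℝ) : ℂ) := by push_cast; rfl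
  rw [mem_closedBall_iff_norm, h, norm_real, Real.norm_eq_abs, abs_le]
  constructor <;> linarith [hx.1, hx.2]

theorem correlation_eq_integral (hμ : ∀ᵐ x ∂μ, x ∈ Icc (0 : ℝ) 1) (hr : 1 / 2 < r) (t t_w : ℝ) :
    correlation μ t t_w = (2 * π * I)⁻¹ * ∫ x : ℝ, (∮ z in C(1 / 2, r),
      exp (-(x * t + t_w * z)) • correlationKernel μ z x) ∂μ := by
  have hμ' := hμ.mono fun _ ↦ ofReal_mem_closedBall_of_mem_Icc
  have h0 : (0 : ℂ) ∈ closedBall (1 / 2) (1 / 2) := by simp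
  have hmeas : StronglyMeasurable (Function.uncurry fun (z : ℂ) (x : ℝ) ↦
      exp (-(x * t + t_w * z)) • correlationKernel μ z x) := by
    have hexp : Measurable fun q : ℂ × ℝ ↦ exp (-(q.2 * t + t_w * q.1)) := by fun_prop
    exact (hexp.smul (measurable_correlationKernel μ)).stronglyMeasurable
  obtain ⟨B, hB⟩ := ((isCompact_sphere (1 / 2 : ℂ) |1|).prod
    (isCompact_Icc (a := (0 : ℝ)) (b := 1))).exists_bound_of_continuousOn
    (f := fun q ↦ exp (-(q.2 * t + t_w * q.1))) (by fun_prop)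
  simp only [correlation, exp_div_mul_integral_div_eq_integral_correlationKernel,
    one_div (2 * (π : ℂ) * I)]
  congr 1
  rw [circleIntegral_integral_swap hmeas (integrable_const (B * ((1 + 1 / 2) / (1 - 1 / 2) ^ 2)))]
  · refine integral_congr_ae ?_
    filter_upwards [hμ'] with x hx
    have hexp : Differentiable ℂ fun z : ℂ ↦ exp (-(x * t + t_w * z)) := by fun_prop
    exact circleIntegral_eq_of_differentiableOn_compl_closedBall one_half_pos.le hr one_half_lt_one
      (hexp.differentiableOn.smul (differentiableOn_correlationKernel hμ' h0 hx))
  · filter_upwards [hμ] with x hx z hz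
    rw [norm_smul]
    exact mul_le_mul (hB (z, x) ⟨hz, hx⟩) (norm_correlationKernel_le hμ' h0
      (ofReal_mem_closedBall_of_mem_Icc hx) (abs_one (α := ℝ) ▸ hz) one_half_lt_one)
      (norm_nonneg _) ((norm_nonneg _).trans (hB (z, x) ⟨hz, hx⟩))

theorem exp_neg_mul_mul_correlation_eq_integral (hμ : ∀ᵐ x ∂μ, x ∈ Icc (0 : ℝ) 1)
    (hr : 1 / 2 < r) (θ s : ℝ) (ω : ℂ) :
    exp (-(ω * s)) * correlation μ (θ * s) s = (2 * π * I)⁻¹ *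
      ∫ x : ℝ, (∮ z in C(1 / 2, r),
        exp (-((ω + x * θ + z) * s)) • correlationKernel μ z x) ∂μ := by
  have hexp (x : ℝ) (z : ℂ) : exp (-((ω + x * θ + z) * s)) =
      exp (-(ω * s)) * exp (-(x * ((θ * s : ℝ) : ℂ) + s * z)) := by
    rw [← exp_add]
    push_cast
    ring_nf
  simp only [correlation_eq_integral hμ hr, hexp, mul_smul, circleIntegral.integral_smul,
    integral_smul]
  exact mul_left_comm _ _ _

theorem rem_trap_laplace_transform_of_correlation_general
    (hμ : ∀ᵐ x ∂μ, x ∈ Icc (0 : ℝ) 1) (hθ : 0 ≤ θ) (hω : 0 < ω.re) :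
    ∫ s : ℝ in Ioi 0, exp (-(ω * s)) * correlation μ (θ * s) s =
      ∫ x : ℝ, ((ω + x * θ + x) * ∫ y : ℝ, (ω + x * θ) / (ω + x * θ + y) ∂μ)⁻¹ ∂μ := by
  obtain ⟨r, hr, hrω⟩ : ∃ r, 1 / 2 < r ∧ r < 1 / 2 + ω.re := exists_between (by linarith)
  have hμ' := hμ.mono fun _ ↦ ofReal_mem_closedBall_of_mem_Icc
  have h0 : (0 : ℂ) ∈ closedBall (1 / 2) (1 / 2) := by simp
  have hrabs : |r| = r := abs_of_pos (one_half_pos.trans hr)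
  have hre : ∀ᵐ x : ℝ ∂μ, 1 / 2 + ω.re - r ≤ (ω + x * θ + 1 / 2).re - |r| := by
    filter_upwards [hμ] with x hx
    have := mul_nonneg hx.1 hθ
    simp only [hrabs, add_re, re_mul_ofReal, ofReal_re, one_div, inv_re, re_ofNat, normSq_ofNat]
    linarith
  simp only [exp_neg_mul_mul_correlation_eq_integral hμ hr]
  rw [integral_const_mul, integral_Ioi_integral_circleIntegral_exp_neg_mul_smul (by fun_prop)
    (measurable_correlationKernel μ).stronglyMeasurable (sub_pos.2 hrω) hre
    (M := (r + 1 / 2) / (r - 1 / 2) ^ 2), ← integral_const_mul]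
  · refine integral_congr_ae ?_
    filter_upwards [hμ', hre] with x hx hrex
    rw [circleIntegral_add_inv_smul_correlationKernel hμ' h0 hx hr (by linarith),
      inv_mul_cancel_left₀ two_pi_I_ne_zero]
  · filter_upwards [hμ'] with x hx z hz
    exact norm_correlationKernel_le hμ' h0 hx (hrabs ▸ hz) hr

end Correlation

section BetaMeasure

open ProbabilityTheory

variable {α : ℝ}

theorem betaPDFReal_one_right (hα : 0 < α) {x : ℝ} (hx : x ∈ Ioo (0 : ℝ) 1) :
    betaPDFReal α 1 x = α * x ^ (α - 1) := by
  have hbeta : beta α 1 = 1 / α := by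
    rw [beta, Real.Gamma_add_one hα.ne', Real.Gamma_one]
    have := (Real.Gamma_pos_of_pos hα).ne'
    field_simp
  simp [betaPDFReal, hx.1, hx.2, hbeta]

theorem measurable_betaPDF (α β : ℝ) : Measurable (betaPDF α β) :=
  (measurable_betaPDFReal α β).ennreal_ofReal

theorem ae_mem_Icc_betaMeasure (α β : ℝ) : ∀ᵐ x ∂betaMeasure α β, x ∈ Icc (0 : ℝ) 1 := by
  refine (ae_withDensity_iff (measurable_betaPDF α β)).2 (.of_forall ?_)
  intro x hx
  contrapose! hx
  rcases not_and_or.1 hx with h | h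
  · exact betaPDF_eq_zero_of_nonpos (not_le.1 h).le
  · exact betaPDF_eq_zero_of_one_le (not_le.1 h).le

theorem integral_betaMeasure_one_right {E : Type*} [NormedAddCommGroup E] [NormedSpace ℝ E]
    (hα : 0 < α) (f : ℝ → E) :
    ∫ x, f x ∂betaMeasure α 1 = ∫ x in (0 : ℝ)..1, (α * x ^ (α - 1)) • f x := by
  have hzero : ∀ x ∉ Ioo (0 : ℝ) 1, (betaPDF α 1 x).toReal • f x = 0 := fun x hx ↦ by
    rw [betaPDF_eq, if_neg (mt mem_Ioo.2 hx), ENNReal.ofReal_zero, ENNReal.toReal_zero, zero_smul]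
  rw [betaMeasure, integral_withDensity_eq_integral_toReal_smul
      (measurable_betaPDF α 1) (.of_forall fun _ ↦ ENNReal.ofReal_lt_top),
    ← setIntegral_eq_integral_of_forall_compl_eq_zero hzero,
    intervalIntegral.integral_of_le zero_le_one, integral_Ioc_eq_integral_Ioo]
  refine setIntegral_congr_fun measurableSet_Ioo fun x hx ↦ ?_
  simp only [betaPDF]
  rw [ENNReal.toReal_ofReal (betaPDFReal_pos hx.1 hx.2 hα one_pos).le, betaPDFReal_one_right hα hx]

end BetaMeasure

end

/-- For every `θ > 0` and every `ω ∈ ℂ` with `Re ω > 0`, the Laplace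
transform of `s ↦ Π(θ s, s)` equals
`Π̂(θ, ω) = ∫_0^1 α x^(α-1) [ (ω + xθ + x) ∫_0^1 (ω + xθ)/(ω + xθ + y) α y^(α-1) dy ]⁻¹ dx`,
where `Π(t, t_w)` is the limiting correlation function given by the contour integral
`(1/(2πi)) ∮_γ (e^{-t_w λ}/λ) [∫_0^1 e^{-xt}/(λ-x) α x^(α-1) dx] /
[∫_0^1 1/(λ-x) α x^(α-1) dx] dλ` over a positively oriented loop `γ` around `[0,1]`
(here, the circle of center `1/2` and radius `1`). -/
theorem rem_trap_laplace_transform_of_correlation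
    (α : ℝ) (hα0 : 0 < α) (hα1 : α < 1)
    (Pi_ : ℝ → ℝ → ℂ)
    (hPi : ∀ t t_w : ℝ, Pi_ t t_w =
      (1 / (2 * Real.pi * Complex.I)) *
        ∮ z in C((1 : ℂ)/2, 1),
          (Complex.exp (-(t_w * z)) / z) *
            ((∫ u in (0:ℝ)..1,
                Complex.exp (-(u * t)) / (z - u) * ((α * u ^ (α - 1) : ℝ) : ℂ)) /
             (∫ u in (0:ℝ)..1,
                (1 / (z - u)) * ((α * u ^ (α - 1) : ℝ) : ℂ)))) :
    ∀ θ : ℝ, 0 < θ → ∀ ω : ℂ, 0 < ω.re →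
      ∫ s in Set.Ioi (0 : ℝ), Complex.exp (-(ω * s)) * Pi_ (θ * s) s =
        ∫ x in (0:ℝ)..1, ((α * x ^ (α - 1) : ℝ) : ℂ) *
          ((ω + x * θ + x) *
            ∫ y in (0:ℝ)..1,
              ((ω + x * θ) / (ω + x * θ + y)) * ((α * y ^ (α - 1) : ℝ) : ℂ))⁻¹ := by
  intro θ hθ ω hω
  have := ProbabilityTheory.isProbabilityMeasureBeta hα0 one_pos
  have hbeta (f : ℝ → ℂ) : ∫ u in (0 : ℝ)..1, f u * ((α * u ^ (α - 1) : ℝ) : ℂ) =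
      ∫ u, f u ∂ProbabilityTheory.betaMeasure α 1 := by
    simp only [integral_betaMeasure_one_right hα0, Complex.real_smul, mul_comm]
  have hPi_eq (t t_w : ℝ) : Pi_ t t_w = correlation (ProbabilityTheory.betaMeasure α 1) t t_w := by
    simp only [hPi, correlation, hbeta]
  simp only [hPi_eq, mul_comm ((α * _ ^ (α - 1) : ℝ) : ℂ), hbeta]
  exact rem_trap_laplace_transform_of_correlation_general (ae_mem_Icc_betaMeasure α 1) hθ.le hω
end

section
/- Let Z be a nonnegative random variable whose Laplace transform satisfies E(e^{−θZ}) = f(θ) for all θ > 0. Then the distribution function F(z) := P(Z ≤ z) is continuous on ℝ, and there exists a constant c′ > 0 such that F(z) − F(x) ≤ c′·(z^α − x^α) for all 0 < x < z. -/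
open MeasureTheory ProbabilityTheory

/-! The substitution `v = u / (1 - u)` turns `f θ` into `s ∫_θ^∞ v^{-α} (1 + v)^{-1} dv`, where
`s = sin(πα)/π`. Since `v^{-α} (1 + v)^{-1} + v^{-α-1} (1 + v)^{-1} = v^{-α-1}`, this gives
`f θ + s ∫_θ^∞ v^{-α-1} (1 + v)^{-1} dv = (s/α) θ^{-α}`. The second summand is the Laplace transform
of a positive measure: `v^{-α-1}` and `(1 + v)^{-1}` are Laplace transforms of positive measures, so
their product is that of the convolution, and integrating a Laplace transform over `(θ, ∞)` divides
the measure by `x`. The right-hand side is the Laplace transform of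
`(s/α) x^{α-1} / Γ(α) dx` on `(0, ∞)`. By uniqueness of Laplace transforms, the law of `Z` is
dominated by the latter measure, so it has no atoms and its mass on `(x, z]` is at most
`s (z^α - x^α) / (α Γ(α + 1))`.
-/

open Set Filter
open scoped ENNReal Topology

/-- The Laplace transform `θ ↦ ∫ e^{-θx} μ(dx)` of a measure on `ℝ`. It is `ℝ≥0∞`-valued, so
that it makes sense for infinite `μ` and a divergent integral shows up as `∞`. -/
noncomputable def laplaceTransform (μ : Measure ℝ) (θ : ℝ) : ℝ≥0∞ :=
  ∫⁻ x, ENNReal.ofReal (Real.exp (-(θ * x))) ∂μ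

/-- The exponential tilt `e^{-cx} μ(dx)`, not renormalised; it translates the Laplace
transform. -/
noncomputable def expTilt (c : ℝ) (μ : Measure ℝ) : Measure ℝ :=
  μ.withDensity fun x => ENNReal.ofReal (Real.exp (-(c * x)))

instance (c : ℝ) (μ : Measure ℝ) [SFinite μ] : SFinite (expTilt c μ) := by
  unfold expTilt
  infer_instance

lemma laplaceTransform_add (μ ν : Measure ℝ) (θ : ℝ) :
    laplaceTransform (μ + ν) θ = laplaceTransform μ θ + laplaceTransform ν θ :=
  lintegral_add_measure _ _ _

lemma laplaceTransform_smul (c : ℝ≥0∞) (μ : Measure ℝ) (θ : ℝ) :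
    laplaceTransform (c • μ) θ = c * laplaceTransform μ θ :=
  lintegral_smul_measure _ _

lemma laplaceTransform_conv (μ ν : Measure ℝ) [SFinite ν] (θ : ℝ) :
    laplaceTransform (μ ∗ ν) θ = laplaceTransform μ θ * laplaceTransform ν θ := by
  have exp_add_eq_mul (x y : ℝ) : ENNReal.ofReal (Real.exp (-(θ * (x + y)))) =
      ENNReal.ofReal (Real.exp (-(θ * x))) * ENNReal.ofReal (Real.exp (-(θ * y))) := by
    rw [← ENNReal.ofReal_mul (Real.exp_pos _).le, ← Real.exp_add, mul_add, neg_add]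
  simp only [laplaceTransform]
  rw [Measure.lintegral_conv (by fun_prop)]
  simp_rw [exp_add_eq_mul]
  rw [lintegral_lintegral_mul (by fun_prop) (by fun_prop)]

lemma laplaceTransform_expTilt (c : ℝ) (μ : Measure ℝ) (θ : ℝ) :
    laplaceTransform (expTilt c μ) θ = laplaceTransform μ (c + θ) := by
  rw [laplaceTransform, expTilt,
    lintegral_withDensity_eq_lintegral_mul _ (by fun_prop) (by fun_prop)]
  refine lintegral_congr fun x => ?_
  rw [Pi.mul_apply, ← ENNReal.ofReal_mul (Real.exp_pos _).le, ← Real.exp_add, add_mul, neg_add]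

lemma expTilt_injective (c : ℝ) : Function.Injective (expTilt c) :=
  Function.LeftInverse.injective
    (g := fun ρ => ρ.withDensity fun x => (ENNReal.ofReal (Real.exp (-(c * x))))⁻¹) fun μ =>
      withDensity_inv_same (by fun_prop)
        (.of_forall fun x => by simp [Real.exp_pos]) (.of_forall fun x => ENNReal.ofReal_ne_top)

-- For `x ≤ 0` both sides are `∞`, since `(ENNReal.ofReal x)⁻¹ = 0⁻¹ = ∞`.
lemma lintegral_Ioi_exp_neg_mul (θ x : ℝ) :
    ∫⁻ v in Ioi θ, ENNReal.ofReal (Real.exp (-(v * x))) =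
      (ENNReal.ofReal x)⁻¹ * ENNReal.ofReal (Real.exp (-(θ * x))) := by
  simp_rw [mul_comm _ x, ← neg_mul]
  rcases lt_or_ge 0 x with hx | hx
  · rw [← ofReal_integral_eq_lintegral_ofReal (integrableOn_exp_mul_Ioi (neg_lt_zero.2 hx) θ)
        (.of_forall fun v => (Real.exp_pos _).le),
      integral_exp_mul_Ioi (neg_lt_zero.2 hx), neg_div_neg_eq, ENNReal.ofReal_div_of_pos hx,
      ENNReal.div_eq_inv_mul]
  · have exp_le : ∀ v ∈ Ioi θ, ENNReal.ofReal (Real.exp (-x * θ)) ≤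
        ENNReal.ofReal (Real.exp (-x * v)) := fun v hv => by
      have := mul_le_mul_of_nonneg_left (le_of_lt hv) (neg_nonneg.2 hx)
      gcongr
    have exp_ne_zero : ENNReal.ofReal (Real.exp (-x * θ)) ≠ 0 := by simp [Real.exp_pos]
    rw [ENNReal.ofReal_of_nonpos hx, ENNReal.inv_zero, ENNReal.top_mul exp_ne_zero, eq_top_iff]
    calc (⊤ : ℝ≥0∞) = ∫⁻ _ in Ioi θ, ENNReal.ofReal (Real.exp (-x * θ)) := by
          rw [setLIntegral_const, Real.volume_Ioi, ENNReal.mul_top exp_ne_zero]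
      _ ≤ _ := setLIntegral_mono (by fun_prop) exp_le

lemma laplaceTransform_withDensity_inv (μ : Measure ℝ) [SFinite μ] (θ : ℝ) :
    laplaceTransform (μ.withDensity fun x => (ENNReal.ofReal x)⁻¹) θ =
      ∫⁻ v in Ioi θ, laplaceTransform μ v := by
  simp only [laplaceTransform]
  rw [lintegral_withDensity_eq_lintegral_mul _ (by fun_prop) (by fun_prop),
    lintegral_lintegral_swap (by fun_prop)]
  exact lintegral_congr fun x => (lintegral_Ioi_exp_neg_mul θ x).symm

lemma laplaceTransform_map {Ω : Type*} [MeasurableSpace Ω] {P : Measure Ω} [IsFiniteMeasure P]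
    {Z : Ω → ℝ} (hZ : AEMeasurable Z P) (hZ0 : 0 ≤ᵐ[P] Z) {θ : ℝ} (hθ : 0 ≤ θ) :
    laplaceTransform (P.map Z) θ = ENNReal.ofReal (∫ ω, Real.exp (-(θ * Z ω)) ∂P) := by
  have integrable_exp : Integrable (fun ω => Real.exp (-(θ * Z ω))) P := by
    refine (integrable_const (1 : ℝ)).mono' (by fun_prop) ?_
    filter_upwards [hZ0] with ω hω
    rw [Real.norm_of_nonneg (Real.exp_pos _).le, Real.exp_le_one_iff, neg_nonpos]
    exact mul_nonneg hθ hω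
  rw [laplaceTransform, lintegral_map' (by fun_prop) hZ,
    ofReal_integral_eq_lintegral_ofReal integrable_exp (.of_forall fun ω => (Real.exp_pos _).le)]

lemma integrable_exp_mul_of_laplaceTransform_ne_top {μ : Measure ℝ} {t : ℝ}
    (h : laplaceTransform μ (-t) ≠ ∞) :
    Integrable (fun x => Real.exp (t * x)) μ := by
  rw [← lintegral_ofReal_ne_top_iff_integrable (by fun_prop)
    (.of_forall fun x => (Real.exp_pos _).le)]
  simpa only [laplaceTransform, neg_mul, neg_neg] using h

lemma mgf_id_eq_toReal_laplaceTransform (μ : Measure ℝ) (t : ℝ) :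
    mgf id μ t = (laplaceTransform μ (-t)).toReal := by
  rw [mgf, integral_eq_lintegral_of_nonneg_ae (.of_forall fun x => (Real.exp_pos _).le)
    (by fun_prop)]
  simp only [laplaceTransform, neg_mul, neg_neg, id]

section Uniqueness

variable {μ ν : Measure ℝ}

-- Both complex moment generating functions are analytic on the strip above a ball around `0`, and
-- they agree near `0` on the real line; on the imaginary axis they are characteristic functions.
lemma eq_of_laplaceTransform_eventuallyEq_nhds_zero
    (hfin : ∀ᶠ θ in 𝓝 0, laplaceTransform μ θ ≠ ∞)
    (heq : laplaceTransform μ =ᶠ[𝓝 0] laplaceTransform ν) : μ = ν := by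
  obtain ⟨ε, hε, hball⟩ := Metric.eventually_nhds_iff_ball.1 (hfin.and heq)
  have neg_mem {t : ℝ} (ht : t ∈ Metric.ball 0 ε) : -t ∈ Metric.ball 0 ε := by simpa using ht
  have integrable_μ (t : ℝ) (ht : t ∈ Metric.ball 0 ε) : Integrable (fun x => Real.exp (t * x)) μ :=
    integrable_exp_mul_of_laplaceTransform_ne_top (hball _ (neg_mem ht)).1
  have integrable_ν (t : ℝ) (ht : t ∈ Metric.ball 0 ε) : Integrable (fun x => Real.exp (t * x)) ν :=
    integrable_exp_mul_of_laplaceTransform_ne_top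
      ((hball _ (neg_mem ht)).2 ▸ (hball _ (neg_mem ht)).1)
  have : IsFiniteMeasure μ := by
    simpa [integrable_const_iff] using integrable_μ 0 (Metric.mem_ball_self hε)
  have : IsFiniteMeasure ν := by
    simpa [integrable_const_iff] using integrable_ν 0 (Metric.mem_ball_self hε)
  have analytic_μ : AnalyticOnNhd ℂ (complexMGF id μ) {z | z.re ∈ Metric.ball 0 ε} := fun z hz =>
    analyticOnNhd_complexMGF z (interior_maximal integrable_μ Metric.isOpen_ball hz)
  have analytic_ν : AnalyticOnNhd ℂ (complexMGF id ν) {z | z.re ∈ Metric.ball 0 ε} := fun z hz =>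
    analyticOnNhd_complexMGF z (interior_maximal integrable_ν Metric.isOpen_ball hz)
  have eq_near_zero : ∀ᶠ t : ℝ in 𝓝[≠] 0, complexMGF id μ t = complexMGF id ν t := by
    filter_upwards [nhdsWithin_le_nhds (Metric.ball_mem_nhds 0 hε)] with t ht
    rw [complexMGF_ofReal, complexMGF_ofReal, mgf_id_eq_toReal_laplaceTransform,
      mgf_id_eq_toReal_laplaceTransform, (hball _ (neg_mem ht)).2]
  have tendsto_ofReal : Tendsto ((↑) : ℝ → ℂ) (𝓝[≠] 0) (𝓝[≠] ((0 : ℝ) : ℂ)) :=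
    Complex.continuous_ofReal.continuousWithinAt.tendsto_nhdsWithin fun t ht => by simpa using ht
  have eqOn_strip : EqOn (complexMGF id μ) (complexMGF id ν) {z | z.re ∈ Metric.ball 0 ε} :=
    analytic_μ.eqOn_of_preconnected_of_frequently_eq analytic_ν
      ((convex_ball (0 : ℝ) ε).linear_preimage Complex.reLm).isPreconnected
      (by simpa using hε) (tendsto_ofReal.frequently eq_near_zero.frequently)
  refine Measure.ext_of_charFun (funext fun t => ?_)
  rw [← complexMGF_id_mul_I, ← complexMGF_id_mul_I]
  exact eqOn_strip (by simpa using hε)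

theorem eq_of_laplaceTransform_eventuallyEq {c : ℝ}
    (hfin : ∀ᶠ θ in 𝓝 c, laplaceTransform μ θ ≠ ∞)
    (heq : laplaceTransform μ =ᶠ[𝓝 c] laplaceTransform ν) : μ = ν := by
  have tendsto_add : Tendsto (c + ·) (𝓝 0) (𝓝 c) := by
    simpa using (continuous_const_add c).tendsto 0
  refine expTilt_injective c (eq_of_laplaceTransform_eventuallyEq_nhds_zero ?_ ?_)
  · simpa only [laplaceTransform_expTilt] using tendsto_add.eventually hfin
  · simpa only [EventuallyEq, laplaceTransform_expTilt] using tendsto_add.eventually heq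

end Uniqueness

/-- The measure `x^{a-1}/Γ(a) dx` on `(0, ∞)`, the kernel of the Riemann–Liouville fractional
integral of order `a`, which is normalised so that its Laplace transform is `θ^{-a}`. -/
noncomputable def riemannLiouvilleMeasure (a : ℝ) : Measure ℝ :=
  (volume.restrict (Ioi 0)).withDensity fun x => ENNReal.ofReal (x ^ (a - 1) / Real.Gamma a)

instance (a : ℝ) : SFinite (riemannLiouvilleMeasure a) := by
  unfold riemannLiouvilleMeasure
  infer_instance

instance (a : ℝ) : NullSingletonClass (riemannLiouvilleMeasure a) := by
  unfold riemannLiouvilleMeasure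
  infer_instance

section RiemannLiouville

variable {a : ℝ}

lemma laplaceTransform_riemannLiouvilleMeasure (ha : 0 < a) {θ : ℝ} (hθ : 0 < θ) :
    laplaceTransform (riemannLiouvilleMeasure a) θ = ENNReal.ofReal (θ ^ (-a)) := by
  have hΓ := Real.Gamma_pos_of_pos ha
  have integral_eq : ∫ x in Ioi 0, x ^ (a - 1) / Real.Gamma a * Real.exp (-(θ * x)) =
      θ ^ (-a) := by
    simp_rw [div_mul_eq_mul_div]
    rw [integral_div, Real.integral_rpow_mul_exp_neg_mul_Ioi ha hθ, mul_div_cancel_right₀ _ hΓ.ne',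
      one_div, Real.inv_rpow hθ.le, Real.rpow_neg hθ.le]
  have integrable : IntegrableOn (fun x => x ^ (a - 1) / Real.Gamma a * Real.exp (-(θ * x)))
      (Ioi 0) :=
    Integrable.of_integral_ne_zero (integral_eq ▸ (Real.rpow_pos_of_pos hθ _).ne')
  rw [laplaceTransform, riemannLiouvilleMeasure,
    lintegral_withDensity_eq_lintegral_mul _ (by fun_prop) (by fun_prop), ← integral_eq,
    ofReal_integral_eq_lintegral_ofReal integrable]
  · refine setLIntegral_congr_fun measurableSet_Ioi fun x hx => ?_
    have hx : 0 < x := hx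
    rw [Pi.mul_apply, ENNReal.ofReal_mul (by positivity)]
  · filter_upwards [ae_restrict_mem measurableSet_Ioi] with x (hx : 0 < x)
    positivity

lemma riemannLiouvilleMeasure_Ioc (ha : 0 < a) {x z : ℝ} (hx : 0 ≤ x) (hxz : x ≤ z) :
    riemannLiouvilleMeasure a (Ioc x z) =
      ENNReal.ofReal ((z ^ a - x ^ a) / Real.Gamma (a + 1)) := by
  have integral_eq : ∫ t in x..z, t ^ (a - 1) / Real.Gamma a =
      (z ^ a - x ^ a) / Real.Gamma (a + 1) := by
    rw [intervalIntegral.integral_div, integral_rpow (.inl (by linarith)), sub_add_cancel,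
      div_div, Real.Gamma_add_one ha.ne']
  have integrable : IntegrableOn (fun t => t ^ (a - 1) / Real.Gamma a) (Ioc x z) :=
    (intervalIntegrable_iff_integrableOn_Ioc_of_le hxz).1
      ((intervalIntegral.intervalIntegrable_rpow' (by linarith)).div_const _)
  rw [riemannLiouvilleMeasure, withDensity_apply _ measurableSet_Ioc,
    Measure.restrict_restrict measurableSet_Ioc,
    inter_eq_left.2 (Ioc_subset_Ioi_self.trans (Ioi_subset_Ioi hx)), ← integral_eq,
    intervalIntegral.integral_of_le hxz, ofReal_integral_eq_lintegral_ofReal integrable]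
  filter_upwards [ae_restrict_mem measurableSet_Ioc] with t ht
  have : 0 < t := hx.trans_lt ht.1
  positivity

end RiemannLiouville

lemma bijOn_div_one_add_Ioi {θ : ℝ} (hθ : 0 ≤ θ) :
    BijOn (fun v : ℝ => v / (1 + v)) (Ioi θ) (Ioo (θ / (1 + θ)) 1) := by
  refine InvOn.bijOn (f' := fun u => u / (1 - u)) ⟨fun v hv => ?_, fun u hu => ?_⟩
    (fun v hv => ?_) (fun u hu => ?_)
  · have : 0 < 1 + v := by linarith [mem_Ioi.1 hv]
    simp only
    field_simp
    ring
  · have : 0 < 1 - u := by linarith [hu.2]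
    simp only
    field_simp
    ring
  · have hv : θ < v := hv
    constructor
    · rw [div_lt_div_iff₀ (by linarith) (by linarith)]
      linarith
    · rw [div_lt_one (by linarith)]
      linarith
  · have hu' : 0 < 1 - u := by linarith [hu.2]
    have hlt := (div_lt_iff₀ (by linarith)).1 hu.1
    rw [mem_Ioi, lt_div_iff₀ hu']
    linarith

lemma hasDerivAt_div_one_add {v : ℝ} (hv : 1 + v ≠ 0) :
    HasDerivAt (fun v : ℝ => v / (1 + v)) (1 / (1 + v) ^ 2) v :=
  ((hasDerivAt_id v).div ((hasDerivAt_id v).const_add 1) hv).congr_deriv (by simp)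

lemma integral_rpow_mul_one_sub_rpow_eq_integral_Ioi (a b : ℝ) {θ : ℝ} (hθ : 0 ≤ θ) :
    ∫ u in (θ / (1 + θ))..1, u ^ a * (1 - u) ^ b =
      ∫ v in Ioi θ, v ^ a * (1 + v) ^ (-(a + b + 2)) := by
  have hbij := bijOn_div_one_add_Ioi hθ
  have hderiv : ∀ v ∈ Ioi θ,
      HasDerivWithinAt (fun v : ℝ => v / (1 + v)) (1 / (1 + v) ^ 2) (Ioi θ) v := fun v hv =>
    (hasDerivAt_div_one_add (by linarith [mem_Ioi.1 hv])).hasDerivWithinAt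
  have hle : θ / (1 + θ) ≤ 1 := div_le_one_of_le₀ (by linarith) (by linarith)
  rw [intervalIntegral.integral_of_le hle, integral_Ioc_eq_integral_Ioo, ← hbij.image_eq,
    integral_image_eq_integral_abs_deriv_smul measurableSet_Ioi hderiv hbij.injOn]
  refine setIntegral_congr_fun measurableSet_Ioi fun v hv => ?_
  have hv0 : 0 < v := hθ.trans_lt hv
  have hv1 : 0 < 1 + v := by linarith
  have one_sub_eq : 1 - v / (1 + v) = (1 + v)⁻¹ := by
    field_simp
    ring
  simp only [smul_eq_mul]
  rw [one_sub_eq, abs_of_pos (by positivity), Real.div_rpow hv0.le hv1.le, Real.inv_rpow hv1.le,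
    Real.rpow_neg hv1.le, Real.rpow_add hv1, Real.rpow_add hv1, Real.rpow_two]
  field_simp

lemma lintegral_Ioi_rpow_of_lt {a θ : ℝ} (ha : a < -1) (hθ : 0 < θ) :
    ∫⁻ v in Ioi θ, ENNReal.ofReal (v ^ a) = ENNReal.ofReal (-θ ^ (a + 1) / (a + 1)) := by
  rw [← integral_Ioi_rpow_of_lt ha hθ,
    ofReal_integral_eq_lintegral_ofReal (integrableOn_Ioi_rpow_of_lt ha hθ)]
  filter_upwards [ae_restrict_mem measurableSet_Ioi] with v hv
  exact Real.rpow_nonneg (hθ.trans hv).le _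

/-- The positive measure with Laplace transform `θ ↦ ∫_θ^∞ v^{-α-1}(1+v)^{-1} dv`; it is the defect
in the domination of the trap limit law by a multiple of `riemannLiouvilleMeasure α`. -/
noncomputable def trapDefect (α : ℝ) : Measure ℝ :=
  (riemannLiouvilleMeasure (α + 1) ∗ expTilt 1 (riemannLiouvilleMeasure 1)).withDensity
    fun x => (ENNReal.ofReal x)⁻¹

section Domination

variable {α : ℝ}

lemma laplaceTransform_trapDefect (hα : 0 < α) {θ : ℝ} (hθ : 0 < θ) :
    laplaceTransform (trapDefect α) θ =
      ∫⁻ v in Ioi θ, ENNReal.ofReal (v ^ (-(α + 1)) * (1 + v) ^ (-1 : ℝ)) := by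
  rw [trapDefect, laplaceTransform_withDensity_inv]
  refine setLIntegral_congr_fun measurableSet_Ioi fun v hv => ?_
  have hv : 0 < v := hθ.trans hv
  rw [laplaceTransform_conv, laplaceTransform_expTilt,
    laplaceTransform_riemannLiouvilleMeasure (by positivity) hv,
    laplaceTransform_riemannLiouvilleMeasure one_pos (by positivity),
    ENNReal.ofReal_mul (by positivity)]

-- The integrated form of `v^{-α}/(1+v) + v^{-α-1}/(1+v) = v^{-α-1}`.
lemma lintegral_Ioi_add_laplaceTransform_trapDefect (hα : 0 < α) {θ : ℝ} (hθ : 0 < θ) :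
    (∫⁻ v in Ioi θ, ENNReal.ofReal (v ^ (-α) * (1 + v) ^ (-1 : ℝ))) +
      laplaceTransform (trapDefect α) θ =
    laplaceTransform (ENNReal.ofReal α⁻¹ • riemannLiouvilleMeasure α) θ := by
  rw [laplaceTransform_trapDefect hα hθ, laplaceTransform_smul,
    laplaceTransform_riemannLiouvilleMeasure hα hθ, ← lintegral_add_left (by fun_prop)]
  calc ∫⁻ v in Ioi θ, (ENNReal.ofReal (v ^ (-α) * (1 + v) ^ (-1 : ℝ)) +
        ENNReal.ofReal (v ^ (-(α + 1)) * (1 + v) ^ (-1 : ℝ)))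
      = ∫⁻ v in Ioi θ, ENNReal.ofReal (v ^ (-(α + 1))) := by
        refine setLIntegral_congr_fun measurableSet_Ioi fun v hv => ?_
        have hv : 0 < v := hθ.trans hv
        rw [← ENNReal.ofReal_add (by positivity) (by positivity), neg_add, Real.rpow_add hv,
          Real.rpow_neg_one, Real.rpow_neg_one]
        congr 1
        field_simp
        ring
    _ = ENNReal.ofReal α⁻¹ * ENNReal.ofReal (θ ^ (-α)) := by
        rw [lintegral_Ioi_rpow_of_lt (by linarith) hθ, ← ENNReal.ofReal_mul (by positivity),
          neg_add, neg_add_cancel_right, neg_div_neg_eq, div_eq_inv_mul]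

lemma ofReal_integral_Ioi_eq_lintegral (hα : 0 < α) {θ : ℝ} (hθ : 0 < θ) :
    ENNReal.ofReal (∫ v in Ioi θ, v ^ (-α) * (1 + v) ^ (-1 : ℝ)) =
      ∫⁻ v in Ioi θ, ENNReal.ofReal (v ^ (-α) * (1 + v) ^ (-1 : ℝ)) := by
  have lintegral_ne_top : ∫⁻ v in Ioi θ, ENNReal.ofReal (v ^ (-α) * (1 + v) ^ (-1 : ℝ)) ≠ ∞ := by
    refine ne_top_of_le_ne_top ?_ (le_self_add.trans_eq
      (lintegral_Ioi_add_laplaceTransform_trapDefect hα hθ))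
    rw [laplaceTransform_smul, laplaceTransform_riemannLiouvilleMeasure hα hθ]
    finiteness
  rw [integral_eq_lintegral_of_nonneg_ae _ (by fun_prop), ENNReal.ofReal_toReal lintegral_ne_top]
  filter_upwards [ae_restrict_mem measurableSet_Ioi] with v hv
  have hv : 0 < v := hθ.trans hv
  positivity

theorem le_smul_riemannLiouvilleMeasure_of_laplaceTransform_eq (hα : 0 < α) {μ : Measure ℝ}
    {c : ℝ≥0∞} (hc : c ≠ ∞) (hμ : ∀ θ, 0 < θ → laplaceTransform μ θ =
      c * ∫⁻ v in Ioi θ, ENNReal.ofReal (v ^ (-α) * (1 + v) ^ (-1 : ℝ))) :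
    μ ≤ (c * ENNReal.ofReal α⁻¹) • riemannLiouvilleMeasure α := by
  suffices (c * ENNReal.ofReal α⁻¹) • riemannLiouvilleMeasure α = μ + c • trapDefect α from
    this ▸ Measure.le_add_right le_rfl
  have pos_near_one : ∀ᶠ θ : ℝ in 𝓝 1, 0 < θ := lt_mem_nhds one_pos
  refine eq_of_laplaceTransform_eventuallyEq (c := 1) ?_ ?_
  · filter_upwards [pos_near_one] with θ hθ
    rw [laplaceTransform_smul, laplaceTransform_riemannLiouvilleMeasure hα hθ]
    finiteness
  · filter_upwards [pos_near_one] with θ hθ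
    rw [laplaceTransform_add, hμ θ hθ, laplaceTransform_smul c, ← mul_add,
      lintegral_Ioi_add_laplaceTransform_trapDefect hα hθ, ← laplaceTransform_smul, smul_smul]

end Domination

lemma continuous_cdf (μ : Measure ℝ) [IsProbabilityMeasure μ] [NullSingletonClass μ] :
    Continuous (cdf μ) := by
  refine continuous_iff_continuousAt.2 fun z => ?_
  have jump_nonpos : cdf μ z - Function.leftLim (cdf μ) z ≤ 0 := by
    rw [← ENNReal.ofReal_eq_zero, ← StieltjesFunction.measure_singleton, measure_cdf,
      measure_singleton]
  rw [(monotone_cdf μ).continuousAt_iff_leftLim_eq_rightLim, (cdf μ).rightLim_eq]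
  exact ((monotone_cdf μ).leftLim_le le_rfl).antisymm (sub_nonpos.1 jump_nonpos)

lemma cdf_sub_cdf_le_of_le_smul_riemannLiouvilleMeasure {μ : Measure ℝ} [IsProbabilityMeasure μ]
    {a c : ℝ} (ha : 0 < a) (hc : 0 ≤ c) (hμ : μ ≤ ENNReal.ofReal c • riemannLiouvilleMeasure a)
    {x z : ℝ} (hx : 0 ≤ x) (hxz : x ≤ z) :
    cdf μ z - cdf μ x ≤ c / Real.Gamma (a + 1) * (z ^ a - x ^ a) := by
  have hpow : 0 ≤ z ^ a - x ^ a := sub_nonneg.2 (Real.rpow_le_rpow hx hxz ha.le)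
  rw [← ENNReal.ofReal_le_ofReal_iff (by positivity)]
  calc ENNReal.ofReal (cdf μ z - cdf μ x) = μ (Ioc x z) := by
        rw [← StieltjesFunction.measure_Ioc, measure_cdf]
    _ ≤ ENNReal.ofReal c * riemannLiouvilleMeasure a (Ioc x z) := hμ _
    _ = ENNReal.ofReal (c / Real.Gamma (a + 1) * (z ^ a - x ^ a)) := by
        rw [riemannLiouvilleMeasure_Ioc ha hx hxz, ← ENNReal.ofReal_mul hc, div_mul_eq_mul_div,
          mul_div_assoc]

/-- Let `Z` be a nonnegative random variable whose Laplace transform is the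
ageing function `f(θ) = (sin(πα)/π) ∫_{θ/(1+θ)}^1 u^{-α}(1-u)^{α-1} du`, i.e.
`E(e^{-θ Z}) = f θ` for all `θ > 0`.  Then the distribution function `F z = P(Z ≤ z)` is
continuous on `ℝ`, and there is `c' > 0` with `F z - F x ≤ c' (z^α - x^α)` for all
`0 < x < z`. -/
theorem rem_trap_limit_law_distribution_continuous
    (α : ℝ) (hα0 : 0 < α) (hα1 : α < 1)
    {Ω : Type*} [MeasureSpace Ω] (hP : IsProbabilityMeasure (ℙ : Measure Ω))
    (Z : Ω → ℝ) (hZmeas : Measurable Z) (hZnonneg : ∀ ω, 0 ≤ Z ω)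
    (hLaplace : ∀ θ : ℝ, 0 < θ →
      ∫ ω, Real.exp (-(θ * Z ω)) ∂(ℙ : Measure Ω) =
        (Real.sin (Real.pi * α) / Real.pi) *
          ∫ u in (θ / (1 + θ))..1, u ^ (-α) * (1 - u) ^ (α - 1))
    (F : ℝ → ℝ)
    (hF : ∀ z : ℝ, F z = ((ℙ : Measure Ω) {ω : Ω | Z ω ≤ z}).toReal) :
    Continuous F ∧
    ∃ c' : ℝ, 0 < c' ∧ ∀ x z : ℝ, 0 < x → x < z →
      F z - F x ≤ c' * (z ^ α - x ^ α) := by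
  set s := Real.sin (Real.pi * α) / Real.pi
  have hs : 0 < s := div_pos
    (Real.sin_pos_of_pos_of_lt_pi (by positivity) (mul_lt_of_lt_one_right Real.pi_pos hα1))
    Real.pi_pos
  set μ : Measure ℝ := (ℙ : Measure Ω).map Z
  have : IsProbabilityMeasure μ := Measure.isProbabilityMeasure_map hZmeas.aemeasurable
  have laplace_μ (θ : ℝ) (hθ : 0 < θ) : laplaceTransform μ θ =
      ENNReal.ofReal s * ∫⁻ v in Ioi θ, ENNReal.ofReal (v ^ (-α) * (1 + v) ^ (-1 : ℝ)) := by
    rw [laplaceTransform_map hZmeas.aemeasurable (.of_forall hZnonneg) hθ.le, hLaplace θ hθ,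
      integral_rpow_mul_one_sub_rpow_eq_integral_Ioi _ _ hθ.le, ENNReal.ofReal_mul hs.le,
      show -(-α + (α - 1) + 2) = -1 by ring, ofReal_integral_Ioi_eq_lintegral hα0 hθ]
  have hμ : μ ≤ ENNReal.ofReal (s * α⁻¹) • riemannLiouvilleMeasure α := ENNReal.ofReal_mul hs.le ▸
    le_smul_riemannLiouvilleMeasure_of_laplaceTransform_eq hα0 ENNReal.ofReal_ne_top laplace_μ
  have : NullSingletonClass μ :=
    ⟨fun x => Measure.absolutelyContinuous_of_le_smul hμ (measure_singleton x)⟩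
  have hF_cdf : F = cdf μ := funext fun z => by
    rw [hF, cdf_eq_real, map_measureReal_apply hZmeas measurableSet_Iic]
    rfl
  rw [hF_cdf]
  exact ⟨continuous_cdf μ, s * α⁻¹ / Real.Gamma (α + 1), by positivity, fun x z hx hxz =>
    cdf_sub_cdf_le_of_le_smul_riemannLiouvilleMeasure hα0 (by positivity) hμ hx.le hxz.le⟩
end
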